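/- arXiv:1610.03537 — 2 statements merged into one kernel-verified Lean document; each statement's English description precedes it below -/
import Mathlib

section
/- Let (X,T) be a minimal Cantor system and let S be a bounded speedup of T with jump function p and orbit number c. Then there exists a continuous function f : X → ℤ such that p(x) = c + f(x) − f(T(x)) for all x ∈ X; that is, p − c is a T-coboundary. -/
/-- A minimal Cantor-type dynamical system: every `T`-orbit (over `ℤ`) is dense. -/
def IsMinimalHomeo {X : Type*} [TopologicalSpace X] (T : Equiv.Perm X) : Prop :=
  ∀ x : X, Dense (Set.range fun n : ℤ => (T ^ n) x)

/-- The (two-sided) orbit of a point under a bijection. -/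
def zOrbit {X : Type*} (T : Equiv.Perm X) (x : X) : Set X :=
  Set.range fun n : ℤ => (T ^ n) x

/-- `c` is the orbit number of the speedup `S` of `T`: every `T`-orbit is the union of exactly
`c` distinct `S`-orbits. -/
def IsOrbitNumber {X : Type*} (T S : Equiv.Perm X) (c : ℕ) : Prop :=
  0 < c ∧ ∀ x : X,
    {O : Set X | (∃ y : X, O = zOrbit S y) ∧ O ⊆ zOrbit T x}.ncard = c

open Function Set

/-!
On a free `T`-orbit, parametrised by `ℤ` through `i ↦ T ^ i x`, the speedup becomes a permutation
`σ` of `ℤ` with `i < σ i`. Each orbit of `σ` increases from `-∞` to `∞`, so it makes exactly one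
jump `i < 0 ≤ σ i` over the cut at `0`; hence `c` is the number of such jumps. Let `F x` be the sum
of `σ i + 1` over them. Moving the cut from `0` to `1` replaces `σ i + 1` by `σ i` on each of these
jumps and brings in the jump from `0`, of length `p x`, so `F (T x) = F x - c + p x`, and `f = -F`
works.
-/

section MinimalHomeo

theorem zpow_apply_injective_of_infinite_zOrbit {X : Type*} {T : Equiv.Perm X} {x : X}
    (h : (zOrbit T x).Infinite) : Injective fun n : ℤ => (T ^ n) x := by
  have hperiod : minimalPeriod T x = 0 := by
    by_contra hne
    have : NeZero (minimalPeriod (T • ·) x) := ⟨hne⟩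
    have : Finite (MulAction.orbit (Subgroup.zpowers T) x) :=
      Finite.of_equiv _ (MulAction.orbitZPowersEquiv T x).symm
    refine h ((Set.toFinite (MulAction.orbit (Subgroup.zpowers T) x)).subset ?_)
    rintro _ ⟨n, rfl⟩
    exact ⟨⟨T ^ n, n, rfl⟩, rfl⟩
  intro m n hmn
  have hfix : T ^ (m - n) • x = x := by
    rw [sub_eq_neg_add, zpow_add, mul_smul, zpow_neg, inv_smul_eq_iff]
    exact hmn
  rw [MulAction.zpow_smul_eq_iff_minimalPeriod_dvd] at hfix
  change (minimalPeriod T x : ℤ) ∣ m - n at hfix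
  rw [hperiod, Nat.cast_zero, zero_dvd_iff] at hfix
  exact sub_eq_zero.1 hfix

variable {X : Type*} [TopologicalSpace X]

theorem infinite_of_dense_of_perfectSpace [T1Space X] [PerfectSpace X] [Nonempty X] {s : Set X}
    (hs : Dense s) : s.Infinite := by
  intro hfin
  have huniv : s = univ := by rw [← hfin.isClosed.closure_eq, hs.closure_eq]
  exact infinite_of_mem_nhds (Classical.arbitrary X) Filter.univ_mem (huniv ▸ hfin)

theorem IsMinimalHomeo.zpow_apply_injective [T1Space X] [PerfectSpace X] {T : Equiv.Perm X}
    (hT : IsMinimalHomeo T) (x : X) : Injective fun n : ℤ => (T ^ n) x :=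
  have : Nonempty X := ⟨x⟩
  zpow_apply_injective_of_infinite_zOrbit (infinite_of_dense_of_perfectSpace (hT x))

end MinimalHomeo

section Continuity

variable {X Y : Type*} [TopologicalSpace X] [TopologicalSpace Y]

theorem continuous_of_finite_range_of_isClosed_fiber {f : X → Y} (hfin : (range f).Finite)
    (hf : ∀ y, IsClosed (f ⁻¹' {y})) : Continuous f := by
  refine continuous_iff_isClosed.2 fun s _ => ?_
  rw [← preimage_inter_range, ← biUnion_preimage_singleton]
  exact (hfin.inter_of_right s).isClosed_biUnion fun y _ => hf y

theorem continuous_perm_zpow {T : Equiv.Perm X} (hT : Continuous T) (hT' : Continuous T.symm)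
    (n : ℤ) : Continuous ⇑(T ^ n) := by
  cases n with
  | ofNat k =>
    rw [Int.ofNat_eq_natCast, zpow_natCast, Equiv.Perm.coe_pow]
    exact hT.iterate k
  | negSucc k =>
    rw [zpow_negSucc, ← inv_pow, Equiv.Perm.coe_pow]
    exact hT'.iterate (k + 1)

theorem continuous_jump [T2Space X] {T S : Equiv.Perm X} {p : X → ℕ} (hT : Continuous T)
    (hS : Continuous S) (hfree : ∀ x, Injective fun n : ℤ => (T ^ n) x)
    (hbdd : BddAbove (range p)) (hSp : ∀ x, S x = (T ^ p x) x) : Continuous p := by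
  refine continuous_of_finite_range_of_isClosed_fiber hbdd.finite fun k => ?_
  have hfiber : p ⁻¹' {k} = {x | S x = (T ^ k) x} := by
    ext x
    have hinj : Injective fun n : ℕ => (T ^ n) x := by
      simpa only [comp_def, zpow_natCast] using (hfree x).comp Nat.cast_injective
    rw [mem_preimage, mem_singleton_iff, mem_ofPred_eq, hSp]
    exact hinj.eq_iff.symm
  rw [hfiber]
  refine isClosed_eq hS ?_
  rw [Equiv.Perm.coe_pow]
  exact hT.iterate k

end Continuity

section Crossing

theorem existsUnique_mem_Ioc_succ {α β : Type*} [LinearOrder α] [SuccOrder α] [IsSuccArchimedean α]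
    [LinearOrder β] {f : α → β} (hf : Monotone f) (hbelow : ¬BddBelow (range f))
    (habove : ¬BddAbove (range f)) (t : β) : ∃! a, t ∈ Ioc (f a) (f (Order.succ a)) := by
  obtain ⟨_, ⟨m, rfl⟩, hm⟩ := not_bddBelow_iff.1 hbelow t
  obtain ⟨_, ⟨n, rfl⟩, hn⟩ := not_bddAbove_iff.1 habove t
  have hmem : t ∈ ⋃ a ∈ Ico m n, Ioc (f a) (f (Order.succ a)) := by
    rw [hf.biUnion_Ico_Ioc_map_succ]
    exact ⟨hm, hn.le⟩
  obtain ⟨a, -, ha⟩ := mem_iUnion₂.1 hmem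
  refine ⟨a, ha, fun b hb => ?_⟩
  by_contra hne
  exact disjoint_left.1 (hf.pairwise_disjoint_on_Ioc_succ hne) hb ha

theorem existsUnique_sameCycle_mem_Ioc {σ : Equiv.Perm ℤ} (hσ : ∀ i, i < σ i) (t j : ℤ) :
    ∃! i, σ.SameCycle j i ∧ t ∈ Ioc i (σ i) := by
  have hsucc : ∀ k : ℤ, (σ ^ (k + 1)) j = σ ((σ ^ k) j) := fun k => by
    rw [add_comm, zpow_one_add, Equiv.Perm.mul_apply]
  have hmono : StrictMono fun k : ℤ => (σ ^ k) j :=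
    strictMono_int_of_lt_succ fun k => hsucc k ▸ hσ _
  obtain ⟨k, hk, huniq⟩ := existsUnique_mem_Ioc_succ hmono.monotone
    hmono.not_bddBelow_range_of_isPredArchimedean hmono.not_bddAbove_range_of_isSuccArchimedean t
  simp only [Order.succ_eq_add_one, hsucc] at hk huniq
  refine ⟨(σ ^ k) j, ⟨⟨k, rfl⟩, hk⟩, ?_⟩
  rintro _ ⟨⟨l, rfl⟩, hl⟩
  exact congrArg (fun n : ℤ => (σ ^ n) j) (huniq l hl)

end Crossing

section OrbitCount

theorem zOrbit_eq_zOrbit_iff {X : Type*} {S : Equiv.Perm X} {x y : X} :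
    zOrbit S x = zOrbit S y ↔ S.SameCycle x y := by
  constructor
  · intro h
    have hy : y ∈ zOrbit S y := ⟨0, rfl⟩
    rwa [← h] at hy
  · intro h
    ext z
    exact ⟨h.symm.trans, h.trans⟩

theorem exists_perm_forall_zpow_semiconj {ι X : Type*} {e : ι → X} (he : Injective e)
    {S : Equiv.Perm X} (hS : ∀ y, S y ∈ range e ↔ y ∈ range e) :
    ∃ σ : Equiv.Perm ι, ∀ k : ℤ, Semiconj e ⇑(σ ^ k) ⇑(S ^ k) := by
  let E := Equiv.ofInjective e he
  refine ⟨E.symm.permCongrHom (S.subtypePerm hS), fun k i => ?_⟩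
  rw [← map_zpow, Equiv.Perm.subtypePerm_zpow]
  exact congrArg Subtype.val (E.apply_symm_apply _)

variable {X : Type*} {T S : Equiv.Perm X} {p : X → ℕ}

/-- The positions `i < 0` in the `T`-orbit of `x` whose jump, from `i` to `i + p (T ^ i x)`, lands
at a position `≥ 0`. -/
def crossings (T : Equiv.Perm X) (p : X → ℕ) (x : X) : Set ℤ :=
  {i | 0 ∈ Ioc i (i + p ((T ^ i) x))}

theorem exists_perm_int_of_jump (hSp : ∀ x, S x = (T ^ p x) x) {x : X}
    (hfree : Injective fun n : ℤ => (T ^ n) x) :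
    ∃ σ : Equiv.Perm ℤ, (∀ i, σ i = i + p ((T ^ i) x)) ∧
      ∀ k : ℤ, Semiconj (fun i : ℤ => (T ^ i) x) ⇑(σ ^ k) ⇑(S ^ k) := by
  have hrange : ∀ y, S y ∈ zOrbit T x ↔ y ∈ zOrbit T x := fun y => by
    rw [hSp]
    exact Equiv.Perm.sameCycle_pow_right
  obtain ⟨σ, hσ⟩ := exists_perm_forall_zpow_semiconj hfree hrange
  refine ⟨σ, fun i => hfree ?_, hσ⟩
  change (T ^ σ i) x = (T ^ (i + p ((T ^ i) x))) x
  rw [add_comm, zpow_add, Equiv.Perm.mul_apply, zpow_natCast, ← hSp]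
  exact hσ 1 i

theorem bijOn_zOrbit_crossings (hp : ∀ x, 1 ≤ p x) (hSp : ∀ x, S x = (T ^ p x) x) {x : X}
    (hfree : Injective fun n : ℤ => (T ^ n) x) :
    BijOn (fun i : ℤ => zOrbit S ((T ^ i) x)) (crossings T p x)
      {O | (∃ y, O = zOrbit S y) ∧ O ⊆ zOrbit T x} := by
  obtain ⟨σ, hσ, hsemi⟩ := exists_perm_int_of_jump hSp hfree
  have hcycle : ∀ i j, σ.SameCycle i j ↔ S.SameCycle ((T ^ i) x) ((T ^ j) x) := fun i j =>
    exists_congr fun k => by rw [← hsemi k i]; exact hfree.eq_iff.symm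
  have hlt : ∀ i, i < σ i := fun i => by
    have := hp ((T ^ i) x)
    rw [hσ]
    omega
  have hcross : ∀ i, i ∈ crossings T p x ↔ 0 ∈ Ioc i (σ i) := fun i => by rw [hσ]; rfl
  refine ⟨fun i _ => ⟨⟨_, rfl⟩, ?_⟩, fun i hi j hj hij => ?_, ?_⟩
  · rintro _ ⟨k, rfl⟩
    exact ⟨(σ ^ k) i, hsemi k i⟩
  · have hsame := (hcycle i j).2 (zOrbit_eq_zOrbit_iff.1 hij)
    exact (existsUnique_sameCycle_mem_Ioc hlt 0 i).unique ⟨.refl _ _, (hcross i).1 hi⟩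
      ⟨hsame, (hcross j).1 hj⟩
  · rintro _ ⟨⟨y, rfl⟩, hsub⟩
    obtain ⟨j, rfl⟩ : y ∈ zOrbit T x := hsub ⟨0, rfl⟩
    obtain ⟨i, ⟨hsame, hi⟩, -⟩ := existsUnique_sameCycle_mem_Ioc hlt 0 j
    exact ⟨i, (hcross i).2 hi, zOrbit_eq_zOrbit_iff.2 ((hcycle j i).1 hsame).symm⟩

theorem IsOrbitNumber.ncard_crossings {c : ℕ} (hc : IsOrbitNumber T S c) (hp : ∀ x, 1 ≤ p x)
    (hSp : ∀ x, S x = (T ^ p x) x) {x : X} (hfree : Injective fun n : ℤ => (T ^ n) x) :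
    (crossings T p x).ncard = c :=
  (bijOn_zOrbit_crossings hp hSp hfree).ncard_eq.trans (hc.2 x)

end OrbitCount

section Overshoot

variable {X : Type*} {T : Equiv.Perm X} {p : X → ℕ} {M : ℕ}

/-- The sum over `crossings T p x` of the number of positions from `0` up to the landing position,
when `p ≤ M`. All `i ∈ [-M, 0)` may be summed over because `Int.toNat` gives `0` at those that are
not crossings. -/
noncomputable def overshoot (T : Equiv.Perm X) (p : X → ℕ) (M : ℕ) (x : X) : ℕ :=
  ∑ i ∈ Finset.Ico (-M : ℤ) 0, (i + p ((T ^ i) x) + 1).toNat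

theorem continuous_overshoot [TopologicalSpace X] (hT : Continuous T) (hT' : Continuous T.symm)
    (hp : Continuous p) (M : ℕ) : Continuous (overshoot T p M) := by
  refine continuous_finsetSum _ fun i _ => ?_
  exact (continuous_of_discreteTopology (f := fun n : ℕ => (i + n + 1 : ℤ).toNat)).comp
    (hp.comp (continuous_perm_zpow hT hT' i))

theorem ncard_crossings_eq_sum (hM : ∀ x, p x ≤ M) (x : X) :
    (crossings T p x).ncard =
      ∑ i ∈ Finset.Ico (-M : ℤ) 0, if 0 ≤ i + p ((T ^ i) x) then 1 else 0 := by
  have hcoe : crossings T p x =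
      ((Finset.Ico (-M : ℤ) 0).filter fun i => 0 ≤ i + p ((T ^ i) x) : Finset ℤ) := by
    ext i
    have := hM ((T ^ i) x)
    simp only [crossings, mem_ofPred_eq, mem_Ioc, Finset.mem_coe, Finset.mem_filter,
      Finset.mem_Ico]
    omega
  rw [hcoe, ncard_coe_finset, Finset.card_filter]

theorem overshoot_apply (hM : ∀ x, p x ≤ M) (x : X) :
    overshoot T p M (T x) = ∑ i ∈ Finset.Ico (-M : ℤ) 0, (i + p ((T ^ i) x)).toNat + p x := by
  let g : ℤ → ℕ := fun i => (i + p ((T ^ i) x)).toNat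
  have hleft : g (-M) = 0 := by
    have := hM ((T ^ (-M : ℤ)) x)
    simp only [g]
    omega
  have hright : g 0 = p x := by simp [g]
  calc overshoot T p M (T x) = ∑ i ∈ Finset.Ico (-M : ℤ) 0, g (i + 1) := by
        refine Finset.sum_congr rfl fun i _ => ?_
        simp only [g]
        rw [zpow_add_one, Equiv.Perm.mul_apply, add_right_comm]
    _ = ∑ i ∈ Finset.Ioc (-M : ℤ) 0, g i := by
        rw [Finset.sum_Ico_add', Finset.Ico_add_one_add_one_eq_Ioc]
    _ = ∑ i ∈ Finset.Ioc (-M : ℤ) 0, g i + g (-M) := by rw [hleft, add_zero]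
    _ = ∑ i ∈ Finset.Ico (-M : ℤ) 0, g i + g 0 := by
        rw [Finset.sum_Ioc_add_eq_sum_Icc (by omega), Finset.sum_Ico_add_eq_sum_Icc (by omega)]
    _ = ∑ i ∈ Finset.Ico (-M : ℤ) 0, g i + p x := by rw [hright]

theorem overshoot_apply_add_ncard_crossings (hM : ∀ x, p x ≤ M) (x : X) :
    overshoot T p M (T x) + (crossings T p x).ncard = overshoot T p M x + p x := by
  have hterm : ∀ i : ℤ, (i + p ((T ^ i) x) + 1).toNat =
      (i + p ((T ^ i) x)).toNat + if 0 ≤ i + p ((T ^ i) x) then 1 else 0 := fun i => by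
    split_ifs <;> omega
  rw [overshoot_apply hM, ncard_crossings_eq_sum hM, overshoot]
  simp only [hterm]
  rw [Finset.sum_add_distrib, add_right_comm]

end Overshoot

theorem boundedSpeedup_jump_eq_const_add_coboundary_general
    {X : Type*} [TopologicalSpace X] [T2Space X]
    (T : Equiv.Perm X) (hTc : Continuous T) (hTc' : Continuous T.symm)
    (hfree : ∀ x, Injective fun n : ℤ => (T ^ n) x)
    (p : X → ℕ) (hp1 : ∀ x, 1 ≤ p x) (hpbdd : ∃ M : ℕ, ∀ x, p x ≤ M)
    (S : Equiv.Perm X) (hSc : Continuous S) (hSp : ∀ x, S x = (T ^ p x) x)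
    (c : ℕ) (hc : IsOrbitNumber T S c) :
    ∃ f : X → ℤ, Continuous f ∧ ∀ x : X, (p x : ℤ) = c + f x - f (T x) := by
  obtain ⟨M, hM⟩ := hpbdd
  have hp : Continuous p := continuous_jump hTc hSc hfree ⟨M, forall_mem_range.2 hM⟩ hSp
  refine ⟨fun x => -(overshoot T p M x : ℤ),
    (continuous_of_discreteTopology (f := fun n : ℕ => -(n : ℤ))).comp
      (continuous_overshoot hTc hTc' hp M), fun x => ?_⟩
  have hcoboundary := overshoot_apply_add_ncard_crossings (T := T) hM x
  rw [hc.ncard_crossings hp1 hSp (hfree x)] at hcoboundary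
  dsimp only
  omega

/-- If `S` is a bounded speedup of a minimal Cantor system `(X,T)` with jump
function `p` and orbit number `c`, then `p - c` is a `T`-coboundary: there is a continuous
`f : X → ℤ` with `p x = c + f x - f (T x)` for all `x`. -/
theorem boundedSpeedup_jump_eq_const_add_coboundary
    {X : Type*} [TopologicalSpace X] [CompactSpace X]
    [TopologicalSpace.MetrizableSpace X] [TotallyDisconnectedSpace X] [PerfectSpace X]
    [Nonempty X]
    (T : Equiv.Perm X) (hTc : Continuous T) (hTc' : Continuous T.symm)
    (hTmin : IsMinimalHomeo T)
    (p : X → ℕ) (hp1 : ∀ x, 1 ≤ p x) (hpbdd : ∃ M : ℕ, ∀ x, p x ≤ M)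
    (S : Equiv.Perm X) (hSc : Continuous S) (hSc' : Continuous S.symm)
    (hSp : ∀ x, S x = (T ^ p x) x)
    (c : ℕ) (hc : IsOrbitNumber T S c) :
    ∃ f : X → ℤ, Continuous f ∧ ∀ x : X, (p x : ℤ) = c + f x - f (T x) :=
  boundedSpeedup_jump_eq_const_add_coboundary_general T hTc hTc' hTmin.zpow_apply_injective p hp1
    hpbdd S hSc hSp c hc
end

section
/- Let (X,T) be a minimal Cantor system and let S be a bounded speedup of T with jump function p, and suppose S is minimal. Then h(S) ≤ (sup{∫ p dμ : μ ∈ M(X,S)})·h(T), where h denotes topological entropy. -/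
open MeasureTheory

open Filter Topology Dynamics BoundedContinuousFunction
open scoped Uniformity ENNReal

/-!
`T` has no periodic points, so `p x = k` exactly when `S x = T^k x`; hence the finitely many level
sets of `p` are closed and `p` is continuous. If two points remain `V`-close along `N` steps of `T`,
where `V` is so small that `p` is constant on `V`-close pairs, then their `S`-orbits make the same
jumps and are `V`-close for `n` steps, as long as the total jump, a Birkhoff sum of `p`, stays
below `N`. A weak-* limit of empirical measures along orbit segments with large averages is
invariant, so for every `d > sup ∫ p dμ` all Birkhoff sums of `p` of large length `n` are below
`d n`. Covers of order `⌈d n⌉` for `T` are therefore covers of order `n` for `S`. Finally `d`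
decreases to the supremum for a fixed entourage, where the entropy of `T` is finite.
-/

section ErgodicAverage

variable {X : Type*} [MeasurableSpace X] {S : X → X} {f : X → ℝ}

/-- The empirical measure `n⁻¹ ∑_{i < n} δ_{Sⁱ x}` of an orbit segment. It is the zero measure for
`n = 0` and a probability measure otherwise. -/
noncomputable def empiricalMeasure (S : X → X) (n : ℕ) (x : X) : Measure X :=
  (n : ℝ≥0∞)⁻¹ • ∑ i ∈ Finset.range n, Measure.dirac (S^[i] x)

lemma isProbabilityMeasure_empiricalMeasure (S : X → X) {n : ℕ} (hn : n ≠ 0) (x : X) :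
    IsProbabilityMeasure (empiricalMeasure S n x) where
  measure_univ := by
    simp only [empiricalMeasure, Measure.smul_apply, Measure.finsetSum_apply, measure_univ,
      Finset.sum_const, Finset.card_range, nsmul_eq_mul, mul_one, smul_eq_mul]
    exact ENNReal.inv_mul_cancel (by exact_mod_cast hn) (ENNReal.natCast_ne_top n)

lemma integral_empiricalMeasure (S : X → X) (n : ℕ) (x : X) (hf : StronglyMeasurable f) :
    ∫ y, f y ∂(empiricalMeasure S n x) = birkhoffAverage ℝ S f n x := by
  rw [empiricalMeasure, integral_smul_measure,
    integral_finsetSum_measure fun i _ ↦ integrable_dirac' hf enorm_lt_top]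
  simp [birkhoffAverage, birkhoffSum, integral_dirac' _ _ hf]

lemma birkhoffAverage_comp_self {R α M : Type*} [DivisionSemiring R] [AddCommMonoid M] [Module R M]
    (S : α → α) (g : α → M) (n : ℕ) (x : α) :
    birkhoffAverage R S (g ∘ S) n x = birkhoffAverage R S g n (S x) := by
  simp only [birkhoffAverage, birkhoffSum, Function.comp_apply, ← Function.iterate_succ_apply',
    Function.iterate_succ_apply]

/-- The maximal ergodic average `sup {∫ f dμ : μ ∈ M(X, S)}`. Invariance is spelled out on
measurable sets; for measurable `S` it is `MeasurePreserving S μ μ`. -/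
noncomputable def maxErgodicAverage (S : X → X) (f : X → ℝ) : ℝ :=
  sSup {r : ℝ | ∃ μ : Measure X, IsProbabilityMeasure μ ∧
    (∀ B : Set X, MeasurableSet B → μ (S ⁻¹' B) = μ B) ∧ r = ∫ y, f y ∂μ}

lemma maxErgodicAverage_nonneg (S : X → X) (hf : 0 ≤ f) : 0 ≤ maxErgodicAverage S f := by
  refine Real.sSup_nonneg ?_
  rintro _ ⟨μ, -, -, rfl⟩
  exact integral_nonneg hf

lemma integral_le_maxErgodicAverage {C : ℝ} (hf : ∀ x, ‖f x‖ ≤ C) {μ : Measure X}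
    [IsProbabilityMeasure μ] (hμ : MeasurePreserving S μ μ) :
    ∫ y, f y ∂μ ≤ maxErgodicAverage S f := by
  refine le_csSup ⟨C, ?_⟩
    ⟨μ, inferInstance, fun B hB ↦ hμ.measure_preimage hB.nullMeasurableSet, rfl⟩
  rintro _ ⟨ν, _, -, rfl⟩
  calc ∫ y, f y ∂ν ≤ ‖∫ y, f y ∂ν‖ := le_abs_self _
    _ ≤ C * ν.real Set.univ := norm_integral_le_of_norm_le_const (.of_forall hf)
    _ = C := by rw [probReal_univ, mul_one]

variable [TopologicalSpace X] [BorelSpace X]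

/-- The limit is invariant because shifting an orbit segment of length `n` by one step changes a
Birkhoff average by `O(1 / n)`. -/
lemma measurePreserving_of_tendsto_empiricalMeasure [HasOuterApproxClosed X] (hS : Continuous S)
    {ι : Type*} {l : Filter ι} [l.NeBot] {n : ι → ℕ} (hn : Tendsto n l atTop) {x : ι → X}
    {ν : ι → ProbabilityMeasure X}
    (hν : ∀ i, (ν i : Measure X) = empiricalMeasure S (n i) (x i))
    {μ : ProbabilityMeasure X} (hμ : Tendsto ν l (𝓝 μ)) :
    MeasurePreserving S (μ : Measure X) μ := by
  have : IsProbabilityMeasure (Measure.map S (μ : Measure X)) :=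
    Measure.isProbabilityMeasure_map hS.measurable.aemeasurable
  refine ⟨hS.measurable, ext_of_forall_integral_eq_of_IsFiniteMeasure fun g ↦ ?_⟩
  rw [integral_map hS.measurable.aemeasurable g.continuous.aestronglyMeasurable]
  rw [ProbabilityMeasure.tendsto_iff_forall_integral_tendsto] at hμ
  have hshift := (hμ (g.compContinuous ⟨S, hS⟩)).sub (hμ g)
  have hzero : Tendsto (fun i ↦ 2 * ‖g‖ / n i) l (𝓝 0) :=
    (tendsto_const_div_atTop_nhds_zero_nat _).comp hn
  refine eq_of_sub_eq_zero (tendsto_nhds_unique hshift (squeeze_zero_norm (fun i ↦ ?_) hzero))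
  calc ‖∫ y, g (S y) ∂(ν i : Measure X) - ∫ y, g y ∂(ν i : Measure X)‖
      = dist (birkhoffAverage ℝ S g (n i) (S (x i))) (birkhoffAverage ℝ S g (n i) (x i)) := by
        rw [hν, ← birkhoffAverage_comp_self, dist_eq_norm,
          ← integral_empiricalMeasure S _ _ g.continuous.stronglyMeasurable,
          ← integral_empiricalMeasure S _ _ (g.continuous.comp hS).stronglyMeasurable]
        simp only [Function.comp_apply]
    _ = dist (g (S^[n i] (x i))) (g (x i)) / n i := dist_birkhoffAverage_apply_birkhoffAverage ..
    _ ≤ 2 * ‖g‖ / n i := by gcongr; exact g.dist_le_two_norm _ _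

variable [T2Space X] [CompactSpace X] [HasOuterApproxClosed X]

lemma exists_measurePreserving_le_integral (hS : Continuous S) (hf : Continuous f) {c : ℝ}
    (hc : ∃ᶠ n in atTop, ∃ x, c ≤ birkhoffAverage ℝ S f n x) :
    ∃ μ : Measure X, IsProbabilityMeasure μ ∧ MeasurePreserving S μ μ ∧ c ≤ ∫ y, f y ∂μ := by
  obtain ⟨n, hn_mono, hn⟩ := extraction_of_frequently_atTop
    (hc.and_eventually (eventually_ne_atTop 0))
  choose x hx using fun k ↦ (hn k).1
  let ν (k : ℕ) : ProbabilityMeasure X :=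
    ⟨empiricalMeasure S (n k) (x k), isProbabilityMeasure_empiricalMeasure S (hn k).2 (x k)⟩
  obtain ⟨μ, -, hμ⟩ := isCompact_univ.ultrafilter_le_nhds ((hyperfilter ℕ).map ν) (by simp)
  replace hμ : Tendsto ν (hyperfilter ℕ) (𝓝 μ) := hμ
  have hn_top : Tendsto n (hyperfilter ℕ) atTop :=
    hn_mono.tendsto_atTop.mono_left Nat.hyperfilter_le_atTop
  refine ⟨μ, inferInstance,
    measurePreserving_of_tendsto_empiricalMeasure hS hn_top (fun _ ↦ rfl) hμ, ?_⟩
  rw [ProbabilityMeasure.tendsto_iff_forall_integral_tendsto] at hμ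
  refine ge_of_tendsto' (hμ (mkOfCompact ⟨f, hf⟩)) fun k ↦ (hx k).trans_eq ?_
  exact (integral_empiricalMeasure S (n k) (x k) hf.stronglyMeasurable).symm

lemma eventually_forall_birkhoffAverage_lt (hS : Continuous S) (hf : Continuous f) {d : ℝ}
    (hd : maxErgodicAverage S f < d) :
    ∀ᶠ n in atTop, ∀ x, birkhoffAverage ℝ S f n x < d := by
  by_contra hcon
  have hfreq : ∃ᶠ n in atTop, ∃ x, d ≤ birkhoffAverage ℝ S f n x := by
    simpa only [not_eventually, not_forall, not_lt] using hcon
  obtain ⟨μ, hμ_prob, hμ, hdμ⟩ := exists_measurePreserving_le_integral hS hf hfreq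
  obtain ⟨C, hC⟩ := isCompact_univ.exists_bound_of_continuousOn hf.continuousOn
  exact (hdμ.trans (integral_le_maxErgodicAverage (fun x ↦ hC x trivial) hμ)).not_gt hd

lemma eventually_forall_birkhoffSum_lt (hS : Continuous S) {p : X → ℕ} (hp : Continuous p)
    {d : ℝ} (hd : maxErgodicAverage S (fun x ↦ (p x : ℝ)) < d) :
    ∀ᶠ n : ℕ in atTop, ∀ x, ((birkhoffSum S p n x : ℕ) : ℝ) < d * n := by
  filter_upwards [eventually_forall_birkhoffAverage_lt hS (by fun_prop) hd, eventually_gt_atTop 0]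
    with n hn hpos x
  have hcast : ((birkhoffSum S p n x : ℕ) : ℝ) = birkhoffSum S (fun x ↦ (p x : ℝ)) n x :=
    map_birkhoffSum (Nat.castAddMonoidHom ℝ) S p n x
  have havg := hn x
  rwa [birkhoffAverage, smul_eq_mul, inv_mul_lt_iff₀ (by exact_mod_cast hpos), mul_comm,
    ← hcast] at havg

end ErgodicAverage

lemma le_coe_mul_of_forall_gt {a b : EReal} (hb : b ≠ ⊥) (hb' : b ≠ ⊤) {c : ℝ}
    (h : ∀ d : ℝ, c < d → a ≤ d * b) : a ≤ c * b := by
  lift b to ℝ using ⟨hb', hb⟩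
  have hcont : Continuous fun d : ℝ ↦ ((d * b : ℝ) : EReal) :=
    continuous_coe_real_ereal.comp (by fun_prop)
  have hlim : Tendsto (fun d : ℝ ↦ ((d * b : ℝ) : EReal)) (𝓝[>] c) (𝓝 ((c * b : ℝ) : EReal)) :=
    (hcont.tendsto c).mono_left nhdsWithin_le_nhds
  rw [← EReal.coe_mul]
  refine ge_of_tendsto hlim ?_
  filter_upwards [self_mem_nhdsWithin] with d hd using h d hd

section Speedup

variable {X : Type*} {S T : X → X} {p : X → ℕ}

lemma iterate_speedup (hS : ∀ x, S x = T^[p x] x) (n : ℕ) (x : X) :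
    S^[n] x = T^[birkhoffSum S p n x] x := by
  induction n with
  | zero => simp
  | succ n ih =>
    rw [Function.iterate_succ_apply', hS, birkhoffSum_succ, add_comm, Function.iterate_add_apply,
      ← ih]

lemma monotone_birkhoffSum {M : Type*} [AddCommMonoid M] [PartialOrder M] [IsOrderedAddMonoid M]
    [CanonicallyOrderedAdd M] (S : X → X) (g : X → M) (x : X) :
    Monotone fun n ↦ birkhoffSum S g n x :=
  fun _ _ hmn ↦ Finset.sum_le_sum_of_subset (Finset.range_mono hmn)

section Entourage

variable {U V : SetRel X X} {n N : ℕ}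

lemma birkhoffSum_eq_of_mem_dynEntourage (hS : ∀ x, S x = T^[p x] x)
    (hV : ∀ x y, (x, y) ∈ V → p x = p y) {x y : X} (hxy : (x, y) ∈ dynEntourage T V N)
    (hN : birkhoffSum S p n x < N) :
    birkhoffSum S p n x = birkhoffSum S p n y := by
  induction n with
  | zero => simp
  | succ n ih =>
    have hlt : birkhoffSum S p n x < N := (monotone_birkhoffSum S p x n.le_succ).trans_lt hN
    have hjump : p (S^[n] x) = p (S^[n] y) := by
      rw [iterate_speedup hS, iterate_speedup hS n y, ← ih hlt]
      exact hV _ _ (mem_dynEntourage.1 hxy _ hlt)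
    rw [birkhoffSum_succ, birkhoffSum_succ, ih hlt, hjump]

lemma dynEntourage_subset_dynEntourage_speedup (hS : ∀ x, S x = T^[p x] x) (hVU : V ⊆ U)
    (hV : ∀ x y, (x, y) ∈ V → p x = p y) (hN : ∀ x, birkhoffSum S p n x < N) :
    dynEntourage T V N ⊆ dynEntourage S U n := by
  rintro ⟨x, y⟩ hxy
  refine mem_dynEntourage.2 fun k hk ↦ hVU ?_
  have hlt : birkhoffSum S p k x < N := (monotone_birkhoffSum S p x hk.le).trans_lt (hN x)
  rw [iterate_speedup hS, iterate_speedup hS k y,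
    ← birkhoffSum_eq_of_mem_dynEntourage hS hV hxy hlt]
  exact mem_dynEntourage.1 hxy _ hlt

lemma coverMincard_le_of_dynEntourage_subset (F : Set X)
    (h : dynEntourage T V N ⊆ dynEntourage S U n) :
    coverMincard S F U n ≤ coverMincard T F V N :=
  biInf_mono fun _ hs ↦ SetRel.IsCover.mono_entourage h hs

lemma coverEntropyEntourage_speedup_le (hS : ∀ x, S x = T^[p x] x) (F : Set X) (hVU : V ⊆ U)
    (hV : ∀ x y, (x, y) ∈ V → p x = p y) {d : ℝ} (hd : 0 < d)
    (hbd : ∀ᶠ n : ℕ in atTop, ∀ x, ((birkhoffSum S p n x : ℕ) : ℝ) < d * n) :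
    coverEntropyEntourage S F U ≤ d * coverEntropyEntourage T F V := by
  have hceil : Tendsto (fun n : ℕ ↦ ((⌈d * n⌉₊ : ℕ) : EReal) / n) atTop (𝓝 d) := by
    have h := (tendsto_nat_ceil_mul_div_atTop hd.le).comp tendsto_natCast_atTop_atTop
    refine ((continuous_coe_real_ereal.tendsto d).comp h).congr fun n ↦ ?_
    simp [EReal.coe_div]
  calc coverEntropyEntourage S F U
      ≤ ExpGrowth.expGrowthSup
          ((fun N ↦ (coverMincard T F V N : ℝ≥0∞)) ∘ fun n : ℕ ↦ ⌈d * n⌉₊) := by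
        refine ExpGrowth.expGrowthSup_eventually_monotone (hbd.mono fun n hn ↦ ?_)
        refine ENat.toENNReal_mono (coverMincard_le_of_dynEntourage_subset F ?_)
        exact dynEntourage_subset_dynEntourage_speedup hS hVU hV fun x ↦ Nat.lt_ceil.2 (hn x)
    _ = d * coverEntropyEntourage T F V :=
        Monotone.expGrowthSup_comp
          (fun _ _ hmn ↦ ENat.toENNReal_mono (coverMincard_monotone_time T F V hmn))
          hceil (by exact_mod_cast hd.ne') (EReal.coe_ne_top d)

end Entourage

variable [UniformSpace X] [CompactSpace X] [T2Space X] [HasOuterApproxClosed X]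
  [MeasurableSpace X] [BorelSpace X]

theorem boundedSpeedup_entropy_upper_bound_general [Nonempty X] (hS : Continuous S)
    (hp : Continuous p) (hSp : ∀ x, S x = T^[p x] x) :
    coverEntropy S Set.univ ≤
      (maxErgodicAverage S (fun x ↦ (p x : ℝ)) : EReal) * coverEntropy T Set.univ := by
  set c := maxErgodicAverage S (fun x ↦ (p x : ℝ))
  have hc : 0 ≤ c := maxErgodicAverage_nonneg S fun x ↦ Nat.cast_nonneg (p x)
  refine iSup₂_le fun U hU ↦ ?_
  set V : SetRel X X := U ∩ {xy | p xy.1 = p xy.2}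
  have hV : V ∈ 𝓤 X := inter_mem hU <| CompactSpace.uniformContinuous_of_continuous hp <|
    discreteUniformity_iff_setRelId_mem_uniformity.1 inferInstance
  have hV_finite : coverEntropyEntourage T Set.univ V < ⊤ :=
    coverEntropyEntourage_finite_of_isCompact_invariant isCompact_univ (Set.mapsTo_univ _ _) hV
  have hV_nonneg : 0 ≤ coverEntropyEntourage T Set.univ V :=
    coverEntropyEntourage_nonneg T Set.univ_nonempty V
  calc coverEntropyEntourage S Set.univ U
      ≤ c * coverEntropyEntourage T Set.univ V :=
        le_coe_mul_of_forall_gt (EReal.bot_lt_zero.trans_le hV_nonneg).ne' hV_finite.ne fun d hd ↦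
          coverEntropyEntourage_speedup_le hSp _ Set.inter_subset_left (fun _ _ h ↦ h.2)
            (hc.trans_lt hd) (eventually_forall_birkhoffSum_lt hS hp hd)
    _ ≤ c * coverEntropy T Set.univ := by
        gcongr
        exact coverEntropyEntourage_le_coverEntropy T Set.univ hV

end Speedup

lemma IsMinimalHomeo.injective_iterate_apply {X : Type*} [TopologicalSpace X] [T1Space X]
    [Infinite X] {T : Equiv.Perm X} (hT : IsMinimalHomeo T) (x : X) :
    Function.Injective fun n : ℕ ↦ T^[n] x := by
  refine Function.Injective.of_lt_imp_ne fun m n hmn heq ↦ ?_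
  have hfix : (T ^ (n - m)) x = x := Function.iterate_cancel T.injective heq.symm
  have hperiodic : Function.Periodic (fun k : ℤ ↦ (T ^ k) x) (n - m : ℕ) := fun k ↦ by
    beta_reduce
    rw [zpow_add, zpow_natCast, Equiv.Perm.mul_apply, hfix]
  have hfinite : (Set.range fun k : ℤ ↦ (T ^ k) x).Finite := by
    rw [← hperiodic.image_Ioc (by lia) 0]
    exact (Set.finite_Ioc _ _).image _
  exact Set.infinite_univ (by rwa [← (hT x).closure_eq, hfinite.isClosed.closure_eq])

lemma continuous_of_isClosed_preimage_singleton {X Y : Type*} [TopologicalSpace X]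
    [TopologicalSpace Y] {f : X → Y} (hfin : (Set.range f).Finite)
    (hf : ∀ y, IsClosed (f ⁻¹' {y})) : Continuous f := by
  refine continuous_iff_isClosed.2 fun s _ ↦ ?_
  rw [← Set.preimage_inter_range, ← Set.biUnion_preimage_singleton]
  exact (hfin.inter_of_right s).isClosed_biUnion fun y _ ↦ hf y

lemma continuous_jump_s6 {X : Type*} [TopologicalSpace X] [T2Space X] {T S : X → X}
    (hT : Continuous T) (hS : Continuous S) (hinj : ∀ x, Function.Injective fun n ↦ T^[n] x)
    {p : X → ℕ} (hp : (Set.range p).Finite) (hSp : ∀ x, S x = T^[p x] x) : Continuous p := by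
  refine continuous_of_isClosed_preimage_singleton hp fun k ↦ ?_
  have hlevel : p ⁻¹' {k} = {x | S x = T^[k] x} := by
    ext x
    exact (hinj x).eq_iff.symm.trans (by rw [Set.mem_ofPred_eq, hSp])
  rw [hlevel]
  exact isClosed_eq hS (hT.iterate k)

/-- If `S` is a minimal bounded speedup of a minimal Cantor system `(X,T)`
with jump function `p`, then `h(S) ≤ (sup {∫ p dμ : μ ∈ M(X,S)}) · h(T)`, where `h` is
topological entropy. -/
theorem boundedSpeedup_entropy_upper_bound
    {X : Type*} [MetricSpace X] [CompactSpace X]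
    [TotallyDisconnectedSpace X] [PerfectSpace X] [Nonempty X]
    [MeasurableSpace X] [BorelSpace X]
    (T : Equiv.Perm X) (hTc : Continuous T) (hTc' : Continuous T.symm)
    (hTmin : IsMinimalHomeo T)
    (p : X → ℕ) (hp1 : ∀ x, 1 ≤ p x) (hpbdd : ∃ M : ℕ, ∀ x, p x ≤ M)
    (S : Equiv.Perm X) (hSc : Continuous S) (hSc' : Continuous S.symm)
    (hSp : ∀ x, S x = (T ^ p x) x) (hSmin : IsMinimalHomeo S) :
    Dynamics.coverEntropy (⇑S) Set.univ ≤
      ((sSup {r : ℝ | ∃ μ : Measure X, IsProbabilityMeasure μ ∧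
          (∀ B : Set X, MeasurableSet B → μ (⇑S ⁻¹' B) = μ B) ∧
          r = ∫ y, (p y : ℝ) ∂μ} : ℝ) : EReal) *
        Dynamics.coverEntropy (⇑T) Set.univ := by
  have : Infinite X := Set.infinite_univ_iff.1 <|
    infinite_of_mem_nhds (Classical.arbitrary X) univ_mem
  obtain ⟨M, hM⟩ := hpbdd
  have hp : (Set.range p).Finite := (Set.finite_Iic M).subset (Set.range_subset_iff.2 hM)
  exact boundedSpeedup_entropy_upper_bound_general hSc
    (continuous_jump_s6 hTc hSc hTmin.injective_iterate_apply hp hSp) hSp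
end
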